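/- arXiv:2407.10478 — 2 statements merged into one kernel-verified Lean document; each statement's English description precedes it below -/
import Mathlib

section
/- Let 2 ≤ k < n and let H ∈ Herm(n) satisfy λ_k(H) < λ_{k+1}(H). Then the Frobenius distance from H to the set Σ_k satisfies d(H, Σ_k) = inf{‖H − G‖ : G ∈ Σ_k} = ‖H − H_Σ‖ = √k · D_k(H). -/
open Matrix

noncomputable section

/-- Sorted eigenvalues (increasing, counted with multiplicity) of a Hermitian matrix
(junk value for non-Hermitian matrices). -/
def eigs {n : ℕ} (H : Matrix (Fin n) (Fin n) ℂ) : Fin n → ℝ :=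
  if hH : H.IsHermitian then hH.eigenvalues ∘ Tuple.sort hH.eigenvalues else fun _ => 0

/-- Frobenius norm of a complex matrix. -/
def frobNorm {n : ℕ} (M : Matrix (Fin n) (Fin n) ℂ) : ℝ :=
  Real.sqrt (∑ a, ∑ b, ‖M a b‖ ^ 2)

/-- Mean of the lowest k eigenvalues. -/
def lamBar {n : ℕ} (k : ℕ) (H : Matrix (Fin n) (Fin n) ℂ) : ℝ :=
  (∑ j : Fin n, if (j : ℕ) < k then eigs H j else 0) / k

/-- Standard deviation of the lowest k eigenvalues. -/
def Dk {n : ℕ} (k : ℕ) (H : Matrix (Fin n) (Fin n) ℂ) : ℝ :=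
  Real.sqrt ((∑ j : Fin n, if (j : ℕ) < k then (eigs H j - lamBar k H) ^ 2 else 0) / k)

/-- `Λ_Σ`: the diagonal of sorted eigenvalues, with the lowest k entries replaced
by their mean. -/
def LambdaSigma {n : ℕ} (k : ℕ) (H : Matrix (Fin n) (Fin n) ℂ) : Matrix (Fin n) (Fin n) ℂ :=
  Matrix.diagonal fun i => if (i : ℕ) < k then (lamBar k H : ℂ) else (eigs H i : ℂ)

/-- The set Σ_k of k-fold ground-state degenerate Hermitian matrices:
λ₁ = … = λ_k < λ_{k+1}. -/
def SigmaSet (n k : ℕ) : Set (Matrix (Fin n) (Fin n) ℂ) :=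
  {H | H.IsHermitian ∧ (∀ i j : Fin n, (i : ℕ) < k → (j : ℕ) < k → eigs H i = eigs H j) ∧
    ∀ i j : Fin n, (i : ℕ) < k → (j : ℕ) = k → eigs H i < eigs H j}

/-!
Let `a` be the spectrum of `H`. By the Hoffman–Wielandt inequality, a consequence of Birkhoff's
theorem on doubly stochastic matrices, `‖H - G‖² ≥ ∑ (a i - λ_i(G))²`. If `G ∈ Σ_k` has ground
level `μ`, the lowest `k` terms alone give `‖H - G‖² ≥ ∑_{i < k} (a i - μ)²`, which is
`k (D_k(H)² + (λ̄ - μ)²)` by the variance decomposition.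

Conversely, moving the lowest `k` eigenvalues of `H` to `μ` without changing the eigenvectors
realizes exactly this value. For `μ < λ̄` the result lies in `Σ_k`, because `λ̄ ≤ λ_{k+1}(H)`,
and `μ ↑ λ̄` yields `H_Σ` as a limit of points of `Σ_k`.
-/

lemma sum_sub_sq_eq_sum_sub_mean_sq_add {ι K : Type*} [Field K] [CharZero K] (s : Finset ι)
    (a : ι → K) (μ : K) :
    ∑ i ∈ s, (a i - μ) ^ 2 =
      ∑ i ∈ s, (a i - (∑ j ∈ s, a j) / s.card) ^ 2 +
        s.card * ((∑ j ∈ s, a j) / s.card - μ) ^ 2 := by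
  obtain rfl | hs := s.eq_empty_or_nonempty
  · simp
  have hcard : (s.card : K) ≠ 0 := Nat.cast_ne_zero.2 hs.card_ne_zero
  simp only [sub_sq, Finset.sum_add_distrib, Finset.sum_sub_distrib, ← Finset.sum_mul,
    ← Finset.mul_sum, Finset.sum_const, nsmul_eq_mul]
  field_simp
  ring

lemma sum_sub_sq_le_sum_sub_sq_comp_perm {ι R : Type*} [Fintype ι] [CommRing R]
    [LinearOrder R] [IsStrictOrderedRing R] {f g : ι → R} (hfg : Monovary f g)
    (σ : Equiv.Perm ι) :
    ∑ i, (f i - g i) ^ 2 ≤ ∑ i, (f i - g (σ i)) ^ 2 := by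
  have hcross : ∑ i, f i * g (σ i) ≤ ∑ i, f i * g i := hfg.sum_mul_comp_perm_le_sum_mul
  have hsq : ∑ i, g (σ i) ^ 2 = ∑ i, g i ^ 2 := Equiv.sum_comp σ (g · ^ 2)
  simp only [sub_sq, Finset.sum_add_distrib, Finset.sum_sub_distrib, mul_assoc, ← Finset.mul_sum]
  linarith

lemma exists_perm_sum_le_of_mem_doublyStochastic
    {n R : Type*} [Fintype n] [DecidableEq n] [Field R] [LinearOrder R] [IsStrictOrderedRing R]
    {P : Matrix n n R} (hP : P ∈ doublyStochastic R n) (c : Matrix n n R) :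
    ∃ σ : Equiv.Perm n, ∑ i, c i (σ i) ≤ ∑ i, ∑ j, c i j * P i j := by
  let cost : Matrix n n R →ₗ[R] R := ∑ i, ∑ j, c i j • entryLinearMap R R i j
  have cost_apply (Q : Matrix n n R) : cost Q = ∑ i, ∑ j, c i j * Q i j := by
    simp [cost, LinearMap.sum_apply]
  rw [← SetLike.mem_coe, doublyStochastic_eq_convexHull_permMatrix] at hP
  obtain ⟨_, ⟨σ, rfl⟩, hσ⟩ :=
    (cost.concaveOn convex_univ).exists_le_of_mem_convexHull (Set.subset_univ _) hP
  refine ⟨σ, ?_⟩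
  simpa [cost_apply, Equiv.Perm.permMatrix, PEquiv.toMatrix_apply] using hσ

section FrobeniusNorm

open scoped Matrix.Norms.Frobenius
open Unitary

variable {m n 𝕜 : Type*} [Fintype m] [Fintype n] [RCLike 𝕜]

lemma frobenius_norm_sq_eq_sum (A : Matrix m n 𝕜) : ‖A‖ ^ 2 = ∑ i, ∑ j, ‖A i j‖ ^ 2 := by
  simp only [frobenius_norm_def, Real.rpow_two, ← Real.sqrt_eq_rpow]
  exact Real.sq_sqrt (by positivity)

lemma trace_conjTranspose_mul_self_eq_frobenius_norm_sq (A : Matrix m n 𝕜) :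
    (Aᴴ * A).trace = ((‖A‖ ^ 2 : ℝ) : 𝕜) := by
  rw [frobenius_norm_sq_eq_sum, Finset.sum_comm]
  simp [trace, mul_apply, RCLike.conj_mul]

variable [DecidableEq n]

lemma frobenius_norm_unitary_mul (U : unitaryGroup n 𝕜) (A : Matrix n m 𝕜) :
    ‖(U : Matrix n n 𝕜) * A‖ = ‖A‖ := by
  have htrace :
      (((U : Matrix n n 𝕜) * A)ᴴ * ((U : Matrix n n 𝕜) * A)).trace = (Aᴴ * A).trace := by
    rw [conjTranspose_mul, Matrix.mul_assoc, ← Matrix.mul_assoc _ _ A, ← star_eq_conjTranspose,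
      coe_star_mul_self, Matrix.one_mul]
  simpa only [trace_conjTranspose_mul_self_eq_frobenius_norm_sq, RCLike.ofReal_inj,
    sq_eq_sq₀ (norm_nonneg _) (norm_nonneg _)] using htrace

lemma frobenius_norm_mul_unitary (A : Matrix m n 𝕜) (U : unitaryGroup n 𝕜) :
    ‖A * (U : Matrix n n 𝕜)‖ = ‖A‖ := by
  rw [← frobenius_norm_conjTranspose, conjTranspose_mul, ← star_eq_conjTranspose, ← coe_star,
    frobenius_norm_unitary_mul, frobenius_norm_conjTranspose]

lemma frobenius_norm_conjStarAlgAut (U : unitaryGroup n 𝕜) (A : Matrix n n 𝕜) :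
    ‖conjStarAlgAut 𝕜 _ U A‖ = ‖A‖ := by
  rw [conjStarAlgAut_apply, ← coe_star, frobenius_norm_mul_unitary, frobenius_norm_unitary_mul]

lemma frobenius_norm_sq_conj_diagonal_sub_conj_diagonal (U V : unitaryGroup n 𝕜) (a b : n → 𝕜) :
    ‖conjStarAlgAut 𝕜 _ U (diagonal a) - conjStarAlgAut 𝕜 _ V (diagonal b)‖ ^ 2 =
      ∑ i, ∑ j, ‖a i - b j‖ ^ 2 * ‖(star U * V : Matrix n n 𝕜) i j‖ ^ 2 := by
  have hrotate : ((star U : unitaryGroup n 𝕜) : Matrix n n 𝕜) *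
      (conjStarAlgAut 𝕜 _ U (diagonal a) - conjStarAlgAut 𝕜 _ V (diagonal b)) * V =
      diagonal a * (star U * V) - (star U * V) * diagonal b := by
    simp only [conjStarAlgAut_apply, coe_star, mul_sub, sub_mul, mul_assoc, coe_star_mul_self,
      mul_one]
    simp only [← mul_assoc, coe_star_mul_self, one_mul]
  rw [← frobenius_norm_unitary_mul (star U), ← frobenius_norm_mul_unitary _ V, hrotate,
    frobenius_norm_sq_eq_sum]
  simp only [Matrix.sub_apply, diagonal_mul, mul_diagonal, mul_comm _ (b _), ← sub_mul, norm_mul,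
    mul_pow]

lemma norm_sq_unitary_mem_doublyStochastic (W : unitaryGroup n 𝕜) :
    (of fun i j => ‖(W : Matrix n n 𝕜) i j‖ ^ 2) ∈ doublyStochastic ℝ n := by
  have sum_row (V : unitaryGroup n 𝕜) (i : n) : ∑ j, ‖(V : Matrix n n 𝕜) i j‖ ^ 2 = 1 := by
    have hdiag : ∑ j, (‖(V : Matrix n n 𝕜) i j‖ : 𝕜) ^ 2 = 1 := by
      simpa [mul_apply, RCLike.mul_conj] using congr_fun₂ (coe_mul_star_self V) i i
    exact_mod_cast hdiag
  refine mem_doublyStochastic_iff_sum.2 ⟨fun i j => sq_nonneg _, sum_row W, fun j => ?_⟩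
  simpa using sum_row (star W) j

/-- The Hoffman–Wielandt theorem for normal matrices. -/
theorem exists_perm_sum_norm_sub_sq_le (U V : unitaryGroup n 𝕜) (a b : n → 𝕜) :
    ∃ σ : Equiv.Perm n, ∑ i, ‖a i - b (σ i)‖ ^ 2 ≤
      ‖conjStarAlgAut 𝕜 _ U (diagonal a) - conjStarAlgAut 𝕜 _ V (diagonal b)‖ ^ 2 := by
  rw [frobenius_norm_sq_conj_diagonal_sub_conj_diagonal]
  exact exists_perm_sum_le_of_mem_doublyStochastic
    (norm_sq_unitary_mem_doublyStochastic (star U * V)) (of fun i j => ‖a i - b j‖ ^ 2)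

end FrobeniusNorm

section Spectrum

open scoped Matrix.Norms.Frobenius
open Unitary

variable {n : ℕ}

lemma frobNorm_eq_norm (M : Matrix (Fin n) (Fin n) ℂ) : frobNorm M = ‖M‖ := by
  rw [frobNorm, ← frobenius_norm_sq_eq_sum, Real.sqrt_sq (norm_nonneg M)]

lemma frobNorm_nonneg (M : Matrix (Fin n) (Fin n) ℂ) : 0 ≤ frobNorm M :=
  Real.sqrt_nonneg _

lemma monotone_eigs (H : Matrix (Fin n) (Fin n) ℂ) : Monotone (eigs H) := by
  unfold eigs
  split_ifs with hH
  · exact Tuple.monotone_sort _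
  · exact monotone_const

/-- The Hermitian matrix `U · diag(a) · U*` with spectrum `a` and the columns of `U` as
eigenvectors, phrased with the star automorphism that Mathlib's spectral theorem uses. -/
def unitaryDiagonal (U : unitaryGroup (Fin n) ℂ) (a : Fin n → ℝ) : Matrix (Fin n) (Fin n) ℂ :=
  conjStarAlgAut ℂ _ U (diagonal fun i => (a i : ℂ))

lemma eq_unitaryDiagonal_of_star_mul_mul_eq {U : unitaryGroup (Fin n) ℂ}
    {H : Matrix (Fin n) (Fin n) ℂ} {a : Fin n → ℝ}
    (h : star (U : Matrix (Fin n) (Fin n) ℂ) * H * U = diagonal fun i => (a i : ℂ)) :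
    H = unitaryDiagonal U a := by
  rw [unitaryDiagonal, ← h, ← conjStarAlgAut_star_apply (S := ℂ), ← conjStarAlgAut_mul_apply,
    mul_star_self, map_one, StarAlgEquiv.one_apply]

lemma isHermitian_unitaryDiagonal (U : unitaryGroup (Fin n) ℂ) (a : Fin n → ℝ) :
    (unitaryDiagonal U a).IsHermitian := by
  have hdiag : (diagonal fun i => (a i : ℂ)).IsHermitian :=
    isHermitian_diagonal_of_self_adjoint _ <| funext fun i => Complex.conj_ofReal (a i)
  exact IsSelfAdjoint.map hdiag _

lemma frobNorm_unitaryDiagonal_sub_sq (U : unitaryGroup (Fin n) ℂ) (a b : Fin n → ℝ) :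
    frobNorm (unitaryDiagonal U a - unitaryDiagonal U b) ^ 2 = ∑ i, (a i - b i) ^ 2 := by
  rw [frobNorm_eq_norm, unitaryDiagonal, unitaryDiagonal, ← map_sub,
    frobenius_norm_conjStarAlgAut, diagonal_sub, frobenius_norm_diagonal,
    EuclideanSpace.norm_sq_eq]
  simp [← Complex.ofReal_sub]

theorem sum_sub_eigs_sq_le_frobNorm_unitaryDiagonal_sub_sq {a : Fin n → ℝ} (ha : Monotone a)
    (U : unitaryGroup (Fin n) ℂ) {G : Matrix (Fin n) (Fin n) ℂ} (hG : G.IsHermitian) :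
    ∑ i, (a i - eigs G i) ^ 2 ≤ frobNorm (unitaryDiagonal U a - G) ^ 2 := by
  obtain ⟨σ, hσ⟩ := exists_perm_sum_norm_sub_sq_le U hG.eigenvectorUnitary
    (fun i => (a i : ℂ)) (RCLike.ofReal ∘ hG.eigenvalues)
  rw [← hG.spectral_theorem] at hσ
  let sort := Tuple.sort hG.eigenvalues
  have eigs_sort_symm (j : Fin n) : eigs G (sort.symm j) = hG.eigenvalues j := by
    simp [eigs, hG, sort]
  calc ∑ i, (a i - eigs G i) ^ 2
      ≤ ∑ i, (a i - eigs G ((σ.trans sort.symm) i)) ^ 2 :=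
        sum_sub_sq_le_sum_sub_sq_comp_perm (ha.monovary (monotone_eigs G)) _
    _ = ∑ i, ‖(a i : ℂ) - (RCLike.ofReal ∘ hG.eigenvalues) (σ i)‖ ^ 2 := by
        simp [eigs_sort_symm, ← Complex.ofReal_sub]
    _ ≤ frobNorm (unitaryDiagonal U a - G) ^ 2 := by rw [frobNorm_eq_norm]; exact hσ

lemma eigs_unitaryDiagonal {a : Fin n → ℝ} (ha : Monotone a) (U : unitaryGroup (Fin n) ℂ) :
    eigs (unitaryDiagonal U a) = a := by
  have hsum : ∑ i, (a i - eigs (unitaryDiagonal U a) i) ^ 2 ≤ 0 := by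
    simpa [frobNorm] using
      sum_sub_eigs_sq_le_frobNorm_unitaryDiagonal_sub_sq ha U (isHermitian_unitaryDiagonal U a)
  have hzero := (Finset.sum_eq_zero_iff_of_nonneg fun i _ => sq_nonneg _).1
    (hsum.antisymm (by positivity))
  funext i
  exact (sub_eq_zero.1 (pow_eq_zero_iff two_ne_zero |>.1 (hzero i (Finset.mem_univ i)))).symm

end Spectrum

section Collapse

variable {n k : ℕ}

/-- The spectrum `(μ, …, μ, a k, …, a (n - 1))` obtained from a sorted `a` by moving its lowest `k`
entries to `μ`; for the eigenvalues of `H` and `μ = λ̄` it is the diagonal of `Λ_Σ`. -/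
def collapseLowest (k : ℕ) (a : Fin n → ℝ) (μ : ℝ) : Fin n → ℝ :=
  fun i => if (i : ℕ) < k then μ else a i

lemma sum_sub_collapseLowest_sq (a : Fin n → ℝ) (μ : ℝ) :
    ∑ i, (a i - collapseLowest k a μ i) ^ 2 = ∑ i with i.val < k, (a i - μ) ^ 2 := by
  rw [Finset.sum_filter]
  refine Finset.sum_congr rfl fun i _ => ?_
  unfold collapseLowest
  split_ifs <;> simp

lemma unitaryDiagonal_collapseLowest_mem_SigmaSet {a : Fin n → ℝ} (ha : Monotone a) {μ : ℝ}
    (hμ : ∀ j : Fin n, k ≤ j → μ < a j) (U : unitaryGroup (Fin n) ℂ) :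
    unitaryDiagonal U (collapseLowest k a μ) ∈ SigmaSet n k := by
  have hmono : Monotone (collapseLowest k a μ) := by
    intro i j hij
    unfold collapseLowest
    split_ifs with hi hj hj
    · exact le_rfl
    · exact (hμ j (not_lt.1 hj)).le
    · exact absurd (lt_of_le_of_lt (Fin.le_def.1 hij) hj) hi
    · exact ha hij
  refine ⟨isHermitian_unitaryDiagonal U _, fun i j hi hj => ?_, fun i j hi hj => ?_⟩ <;>
    rw [eigs_unitaryDiagonal hmono]
  · simp [collapseLowest, hi, hj]
  · simpa [collapseLowest, hi, hj] using hμ j hj.ge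

variable (H : Matrix (Fin n) (Fin n) ℂ)

lemma card_filter_val_lt_of_le (hkn : k ≤ n) :
    (Finset.univ.filter fun i : Fin n => i.val < k).card = k := by
  rw [Fin.card_filter_val_lt, min_eq_right hkn]

lemma lamBar_le_eigs (hk : 0 < k) (hkn : k ≤ n) {j : Fin n} (hj : k ≤ j) :
    lamBar k H ≤ eigs H j := by
  rw [lamBar, ← Finset.sum_filter, div_le_iff₀' (Nat.cast_pos.2 hk)]
  calc ∑ i with i.val < k, eigs H i
      ≤ (Finset.univ.filter fun i : Fin n => i.val < k).card • eigs H j :=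
        Finset.sum_le_card_nsmul _ _ _ fun i hi => monotone_eigs H <|
          Fin.le_def.2 ((Finset.mem_filter.1 hi).2.le.trans hj)
    _ = k * eigs H j := by rw [card_filter_val_lt_of_le hkn, nsmul_eq_mul]

lemma Dk_nonneg : 0 ≤ Dk k H :=
  Real.sqrt_nonneg _

lemma sum_eigs_sub_sq (hkn : k ≤ n) (μ : ℝ) :
    ∑ i with i.val < k, (eigs H i - μ) ^ 2 = k * (Dk k H ^ 2 + (lamBar k H - μ) ^ 2) := by
  have hvar : k * Dk k H ^ 2 = ∑ i with i.val < k, (eigs H i - lamBar k H) ^ 2 := by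
    rw [Dk, ← Finset.sum_filter, Real.sq_sqrt (by positivity)]
    obtain rfl | hk := k.eq_zero_or_pos
    · simp
    · field_simp
  rw [mul_add, hvar, lamBar, ← Finset.sum_filter, sum_sub_sq_eq_sum_sub_mean_sq_add,
    card_filter_val_lt_of_le hkn]

lemma conj_LambdaSigma_eq_unitaryDiagonal (U : unitaryGroup (Fin n) ℂ) :
    U * LambdaSigma k H * star (U : Matrix (Fin n) (Fin n) ℂ) =
      unitaryDiagonal U (collapseLowest k (eigs H) (lamBar k H)) := by
  simp only [LambdaSigma, unitaryDiagonal, collapseLowest, apply_ite Complex.ofReal,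
    Unitary.conjStarAlgAut_apply]

variable {H} {U : unitaryGroup (Fin n) ℂ}

lemma frobNorm_sub_unitaryDiagonal_collapseLowest (hkn : k ≤ n)
    (hHU : H = unitaryDiagonal U (eigs H)) (μ : ℝ) :
    frobNorm (H - unitaryDiagonal U (collapseLowest k (eigs H) μ)) =
      √(k * (Dk k H ^ 2 + (lamBar k H - μ) ^ 2)) := by
  rw [← sum_eigs_sub_sq H hkn, ← sum_sub_collapseLowest_sq, ← frobNorm_unitaryDiagonal_sub_sq U,
    ← hHU, Real.sqrt_sq (frobNorm_nonneg _)]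

lemma frobNorm_sub_conj_LambdaSigma (hkn : k ≤ n) (hHU : H = unitaryDiagonal U (eigs H)) :
    frobNorm (H - (U : Matrix (Fin n) (Fin n) ℂ) * LambdaSigma k H * star (U : Matrix _ _ ℂ)) =
      √k * Dk k H := by
  rw [conj_LambdaSigma_eq_unitaryDiagonal, frobNorm_sub_unitaryDiagonal_collapseLowest hkn hHU,
    sub_self, zero_pow two_ne_zero, add_zero, Real.sqrt_mul k.cast_nonneg,
    Real.sqrt_sq (Dk_nonneg H)]

lemma sqrt_mul_Dk_le_frobNorm_sub (hk : 0 < k) (hkn : k ≤ n)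
    (hHU : H = unitaryDiagonal U (eigs H)) {G : Matrix (Fin n) (Fin n) ℂ}
    (hG : G ∈ SigmaSet n k) : √k * Dk k H ≤ frobNorm (H - G) := by
  obtain ⟨hGherm, hGdeg, -⟩ := hG
  let μ := eigs G ⟨0, hk.trans_le hkn⟩
  refine le_of_sq_le_sq ?_ (frobNorm_nonneg _)
  calc (√k * Dk k H) ^ 2 = k * Dk k H ^ 2 := by rw [mul_pow, Real.sq_sqrt k.cast_nonneg]
    _ ≤ k * (Dk k H ^ 2 + (lamBar k H - μ) ^ 2) := by
        gcongr
        exact le_add_of_nonneg_right (sq_nonneg _)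
    _ = ∑ i with i.val < k, (eigs H i - eigs G i) ^ 2 := by
        rw [← sum_eigs_sub_sq H hkn]
        refine Finset.sum_congr rfl fun i hi => ?_
        rw [hGdeg i ⟨0, _⟩ (Finset.mem_filter.1 hi).2 hk]
    _ ≤ ∑ i, (eigs H i - eigs G i) ^ 2 :=
        Finset.sum_le_univ_sum_of_nonneg fun i => sq_nonneg _
    _ ≤ frobNorm (H - G) ^ 2 := by
        simpa [← hHU] using
          sum_sub_eigs_sq_le_frobNorm_unitaryDiagonal_sub_sq (monotone_eigs H) U hGherm

open Filter Topology in
theorem isGLB_frobNorm_sub_SigmaSet (hk : 0 < k) (hkn : k ≤ n)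
    (hHU : H = unitaryDiagonal U (eigs H)) :
    IsGLB ((fun G => frobNorm (H - G)) '' SigmaSet n k) (√k * Dk k H) := by
  refine ⟨?_, fun x hx => ?_⟩
  · rintro _ ⟨G, hG, rfl⟩
    exact sqrt_mul_Dk_le_frobNorm_sub hk hkn hHU hG
  have hle : ∀ μ < lamBar k H, x ≤ √(k * (Dk k H ^ 2 + (lamBar k H - μ) ^ 2)) := fun μ hμ => by
    rw [← frobNorm_sub_unitaryDiagonal_collapseLowest hkn hHU]
    exact hx ⟨_, unitaryDiagonal_collapseLowest_mem_SigmaSet (monotone_eigs H)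
      (fun j hj => hμ.trans_le (lamBar_le_eigs H hk hkn hj)) U, rfl⟩
  have hlim : Tendsto (fun μ => √(k * (Dk k H ^ 2 + (lamBar k H - μ) ^ 2)))
      (𝓝[<] lamBar k H) (𝓝 (√k * Dk k H)) := by
    have hcont : Continuous fun μ => √(k * (Dk k H ^ 2 + (lamBar k H - μ) ^ 2)) := by fun_prop
    simpa [Real.sqrt_sq (Dk_nonneg H)] using
      (hcont.tendsto (lamBar k H)).mono_left (nhdsWithin_le_nhds (s := Set.Iio _))
  exact ge_of_tendsto hlim (eventually_nhdsWithin_of_forall hle)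

end Collapse

theorem dist_to_SigmaSet_general {n k : ℕ} (hk : 0 < k) (hkn : k ≤ n)
    (H U : Matrix (Fin n) (Fin n) ℂ) (hU : U ∈ Matrix.unitaryGroup (Fin n) ℂ)
    (hdiag : U⁻¹ * H * U = Matrix.diagonal fun i => (eigs H i : ℂ)) :
    sInf ((fun G => frobNorm (H - G)) '' SigmaSet n k)
        = frobNorm (H - U * LambdaSigma k H * U⁻¹) ∧
    sInf ((fun G => frobNorm (H - G)) '' SigmaSet n k) = Real.sqrt k * Dk k H := by
  lift U to unitaryGroup (Fin n) ℂ using hU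
  have hinv : (U : Matrix (Fin n) (Fin n) ℂ)⁻¹ = star (U : Matrix (Fin n) (Fin n) ℂ) :=
    inv_eq_left_inv (Unitary.coe_star_mul_self U)
  rw [hinv] at hdiag ⊢
  have hHU : H = unitaryDiagonal U (eigs H) := eq_unitaryDiagonal_of_star_mul_mul_eq hdiag
  have hglb := isGLB_frobNorm_sub_SigmaSet hk hkn hHU
  rw [frobNorm_sub_conj_LambdaSigma hkn hHU, hglb.csInf_eq hglb.nonempty]
  exact ⟨rfl, rfl⟩

/-- **Distance from Σ_k (Theorem on the distance):**
`d(H, Σ_k) = inf{‖H−G‖ : G ∈ Σ_k} = ‖H − H_Σ‖ = √k · D_k(H)`. -/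
theorem dist_to_SigmaSet {n k : ℕ} (hk2 : 2 ≤ k) (hkn : k < n)
    (H : Matrix (Fin n) (Fin n) ℂ) (hH : H.IsHermitian)
    (hgap : eigs H ⟨k - 1, by omega⟩ < eigs H ⟨k, hkn⟩)
    (U : Matrix (Fin n) (Fin n) ℂ) (hU : U ∈ Matrix.unitaryGroup (Fin n) ℂ)
    (hdiag : U⁻¹ * H * U = Matrix.diagonal fun i => (eigs H i : ℂ)) :
    sInf ((fun G => frobNorm (H - G)) '' SigmaSet n k)
        = frobNorm (H - U * LambdaSigma k H * U⁻¹) ∧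
    sInf ((fun G => frobNorm (H - G)) '' SigmaSet n k) = Real.sqrt k * Dk k H :=
  dist_to_SigmaSet_general (by omega) hkn.le H U hU hdiag

end
end

section
/- Let f_1,…,f_k be real-analytic functions in a neighborhood of 0 ∈ ℝ such that f_1(t) ≤ f_2(t) ≤ … ≤ f_k(t) for all sufficiently small t ≥ 0, and let f̄ = (f_1 + … + f_k)/k. Then min_{1≤i<j≤k} ord₀(f_i − f_j) = min_{1≤i≤k−1} ord₀(f_i − f_{i+1}) = ord₀(f_1 − f_k) = min_{1≤i≤k} ord₀(f_i − f̄). Moreover, if this common value r is finite, then the function t ↦ (sgn t)^r · √((1/k)·Σ_{i=1}^k (f_i(t) − f̄(t))²) is real-analytic in a neighborhood of 0 and has order r at 0. -/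
noncomputable section

/-- Order of vanishing of a function at `0 ∈ ℝ`: the smallest `j` such that the `j`-th
iterated derivative at `0` is nonzero (for an analytic function this is the smallest index
of a nonzero Taylor coefficient at `0`), and `⊤` if no such `j` exists. -/
def ord0 (f : ℝ → ℝ) : ℕ∞ :=
  sInf {m : ℕ∞ | ∃ j : ℕ, m = (j : ℕ∞) ∧ iteratedDeriv j f 0 ≠ 0}

/-
For analytic functions the order of vanishing is antitone under `=O`, even along a one-sided
approach to the point. The ordering gives `|f i - f j| ≤ |f 0 - f (k - 1)|` on the right of `0`, so
no difference vanishes to lower order than the extremal one. The other comparisons of orders are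
ultrametric. For the last claim, a sum of real squares cannot cancel, so the variance has order
exactly `2 * r`; it equals `t ^ (2 * r) * G t` with `G 0 > 0`, and its root is `|t| ^ r * √(G t)`.
-/

open Filter Topology Asymptotics

theorem ord0_eq_analyticOrderAt {f : ℝ → ℝ} (hf : AnalyticAt ℝ f 0) :
    ord0 f = analyticOrderAt f 0 := by
  refine ENat.eq_of_forall_natCast_le_iff fun n => ?_
  rw [natCast_le_analyticOrderAt_iff_iteratedDeriv_eq_zero hf, ord0, le_sInf_iff]
  constructor
  · intro h i hi
    by_contra hne
    exact hi.not_ge (Nat.cast_le.mp (h i ⟨i, rfl, hne⟩))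
  · rintro h _ ⟨j, rfl, hj⟩
    exact Nat.cast_le.mpr (not_lt.mp fun hjn => hj (h j hjn))

section Order

variable {𝕜 E F ι : Type*} [NontriviallyNormedField 𝕜] [NormedAddCommGroup E] [NormedSpace 𝕜 E]
  [NormedAddCommGroup F] [NormedSpace 𝕜 F] {z₀ : 𝕜}

theorem analyticOrderAt_le_of_isBigO {f : 𝕜 → E} {g : 𝕜 → F} {l : Filter 𝕜} [l.NeBot]
    (hl : l ≤ 𝓝[≠] z₀) (hf : AnalyticAt 𝕜 f z₀) (hfg : f =O[l] g) :
    analyticOrderAt g z₀ ≤ analyticOrderAt f z₀ := by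
  by_contra! hlt
  obtain ⟨n, hn⟩ := ENat.ne_top_iff_exists.mp hlt.ne_top
  have hg : AnalyticAt 𝕜 g z₀ := (analyticOrderAt_ne_zero.mp hlt.ne_bot).1
  obtain ⟨f', hf', hf'0, hff'⟩ := hf.analyticOrderAt_eq_natCast.mp hn.symm
  obtain ⟨g', hg', hgg'⟩ := (natCast_le_analyticOrderAt hg (n := n + 1)).mp <| by
    simpa only [Nat.cast_add, Nat.cast_one, hn] using Order.add_one_le_of_lt hlt
  have hl' : l ≤ 𝓝 z₀ := hl.trans nhdsWithin_le_nhds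
  have hquot : f' =O[l] fun z => (z - z₀) • g' z := by
    obtain ⟨C, hC⟩ := hfg.bound
    refine IsBigO.of_bound C ?_
    filter_upwards [hC, hl' hff', hl' hgg', hl self_mem_nhdsWithin] with z hz hfz hgz hne
    have hpos : 0 < ‖(z - z₀) ^ n‖ := norm_pos_iff.mpr (pow_ne_zero n (sub_ne_zero.mpr hne))
    rw [hfz, hgz, pow_succ, mul_smul, norm_smul, norm_smul, mul_left_comm] at hz
    exact le_of_mul_le_mul_left hz hpos
  have hzero : Tendsto (fun z => (z - z₀) • g' z) l (𝓝 0) := by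
    have hcont : ContinuousAt (fun z => (z - z₀) • g' z) z₀ := by fun_prop
    simpa only [sub_self, zero_smul] using hcont.tendsto.mono_left hl'
  exact hf'0 (tendsto_nhds_unique (hf'.continuousAt.tendsto.mono_left hl')
    (hquot.trans_tendsto hzero))

theorem analyticOrderAt_sub_self (f : 𝕜 → E) : analyticOrderAt (f - f) z₀ = ⊤ :=
  analyticOrderAt_eq_top.mpr (.of_forall fun z => sub_self (f z))

theorem analyticOrderAt_sub_comm (f g : 𝕜 → E) :
    analyticOrderAt (f - g) z₀ = analyticOrderAt (g - f) z₀ := by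
  rw [← analyticOrderAt_neg, neg_sub]

theorem min_analyticOrderAt_sub_le (f g h : 𝕜 → E) :
    min (analyticOrderAt (f - g) z₀) (analyticOrderAt (g - h) z₀) ≤ analyticOrderAt (f - h) z₀ := by
  simpa only [sub_add_sub_cancel] using le_analyticOrderAt_add (f := f - g) (g := g - h) (z₀ := z₀)

theorem analyticOrderAt_const_smul {c : 𝕜} (hc : c ≠ 0) (f : 𝕜 → E) :
    analyticOrderAt (c • f) z₀ = analyticOrderAt f z₀ := by
  by_cases hf : AnalyticAt 𝕜 f z₀
  · have hc0 : analyticOrderAt (fun _ : 𝕜 => c) z₀ = 0 := analyticOrderAt_eq_zero.mpr (.inr hc)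
    simpa only [hc0, zero_add] using! analyticOrderAt_smul (analyticAt_const (v := c)) hf
  · have hcf : ¬AnalyticAt 𝕜 (c • f) z₀ := fun h => hf <| by
      simpa only [inv_smul_smul₀ hc] using h.const_smul (c := c⁻¹)
    rw [analyticOrderAt_of_not_analyticAt hf, analyticOrderAt_of_not_analyticAt hcf]

theorem le_analyticOrderAt_sum {f : ι → 𝕜 → E} {s : Finset ι} {n : ℕ∞}
    (h : ∀ i ∈ s, n ≤ analyticOrderAt (f i) z₀) : n ≤ analyticOrderAt (∑ i ∈ s, f i) z₀ :=
  Finset.sum_induction f (n ≤ analyticOrderAt · z₀)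
    (fun _ _ ha hb => (le_min ha hb).trans le_analyticOrderAt_add)
    (le_top.trans_eq (analyticOrderAt_eq_top.mpr (.of_forall fun _ => rfl)).symm) h

theorem iInf_analyticOrderAt_sub_mean [CharZero 𝕜] [Fintype ι] (f : ι → 𝕜 → E) :
    ⨅ i, analyticOrderAt (fun z => f i z - (Fintype.card ι : 𝕜)⁻¹ • ∑ m, f m z) z₀ =
      ⨅ (i) (j), analyticOrderAt (f i - f j) z₀ := by
  set mean : 𝕜 → E := fun z => (Fintype.card ι : 𝕜)⁻¹ • ∑ m, f m z
  change ⨅ i, analyticOrderAt (f i - mean) z₀ = _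
  refine le_antisymm (le_iInf₂ fun i j => ?_) (le_iInf fun i => ?_)
  · refine le_trans (le_min (iInf_le _ i) ?_) (min_analyticOrderAt_sub_le (f i) mean (f j))
    rw [analyticOrderAt_sub_comm]
    exact iInf_le _ j
  · have : Nonempty ι := ⟨i⟩
    have hcard : (Fintype.card ι : 𝕜) ≠ 0 := Nat.cast_ne_zero.mpr Fintype.card_ne_zero
    have hdev : f i - mean = (Fintype.card ι : 𝕜)⁻¹ • ∑ m, (f i - f m) := by
      ext z
      simp only [mean, Pi.sub_apply, Pi.smul_apply, Finset.sum_apply, Finset.sum_sub_distrib,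
        Finset.sum_const, Finset.card_univ, smul_sub, ← Nat.cast_smul_eq_nsmul 𝕜,
        inv_smul_smul₀ hcard]
    rw [hdev, analyticOrderAt_const_smul (inv_ne_zero hcard)]
    exact le_analyticOrderAt_sum fun m _ => (iInf_le _ i).trans (iInf_le _ m)

end Order

section Pairs

theorem iInf_lt_eq_iInf₂ {ι α : Type*} [LinearOrder ι] [CompleteLattice α] {d : ι → ι → α}
    (hself : ∀ i, d i i = ⊤) (hcomm : ∀ i j, d i j = d j i) :
    ⨅ (i) (j) (_ : i < j), d i j = ⨅ (i) (j), d i j := by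
  refine le_antisymm (le_iInf₂ fun i j => ?_) (iInf₂_mono fun i j => le_iInf fun _ => le_rfl)
  rcases lt_trichotomy i j with hij | rfl | hji
  · exact iInf₂_le_of_le i j (iInf_le _ hij)
  · exact le_top.trans_eq (hself i).symm
  · exact (iInf₂_le_of_le j i (iInf_le _ hji)).trans_eq (hcomm j i)

theorem iInf_lt_eq_iInf_succ {k : ℕ} {α : Type*} [CompleteLattice α] {d : Fin k → Fin k → α}
    (hd : ∀ i j l, d i j ⊓ d j l ≤ d i l) :
    ⨅ (i) (j) (_ : i < j), d i j =
      ⨅ (i : Fin k) (j : Fin k) (_ : (j : ℕ) = (i : ℕ) + 1), d i j := by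
  set a := ⨅ (i : Fin k) (j : Fin k) (_ : (j : ℕ) = (i : ℕ) + 1), d i j
  have hsucc (i j : Fin k) (hij : (j : ℕ) = i + 1) : a ≤ d i j :=
    iInf₂_le_of_le i j (iInf_le _ hij)
  have hchain (i : Fin k) (n : ℕ) (hin : (i : ℕ) + 1 ≤ n) : ∀ hn : n < k, a ≤ d i ⟨n, hn⟩ := by
    induction n, hin using Nat.le_induction with
    | base => exact fun hn => hsucc i ⟨i + 1, hn⟩ rfl
    | succ n _ ih =>
      exact fun hn =>
        (le_inf (ih (by omega)) (hsucc ⟨n, by omega⟩ ⟨n + 1, hn⟩ rfl)).trans (hd _ _ _)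
  refine le_antisymm (iInf₂_mono fun i j => ?_) (le_iInf₂ fun i j => le_iInf fun hij => ?_)
  · exact le_iInf fun hij => iInf_le _ (Fin.lt_def.mpr (by omega))
  · exact hchain i j hij j.isLt

end Pairs

section Real

variable {ι : Type*}

theorem iInf₂_analyticOrderAt_sub_of_monotone [Preorder ι] {f : ι → ℝ → ℝ} {z₀ : ℝ}
    (hf : ∀ i, AnalyticAt ℝ (f i) z₀) (hmono : ∀ᶠ t in 𝓝[>] z₀, Monotone fun i => f i t)
    {a b : ι} (ha : IsBot a) (hb : IsTop b) :
    ⨅ (i) (j), analyticOrderAt (f i - f j) z₀ = analyticOrderAt (f a - f b) z₀ := by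
  refine le_antisymm ((iInf_le _ a).trans (iInf_le _ b)) (le_iInf₂ fun i j => ?_)
  rw [analyticOrderAt_sub_comm (f a)]
  refine analyticOrderAt_le_of_isBigO (nhdsGT_le_nhdsNE z₀) ((hf i).sub (hf j)) ?_
  refine IsBigO.of_norm_eventuallyLE ?_
  filter_upwards [hmono] with t ht
  exact abs_sub_le_of_le_of_le (ht (ha i)) (ht (hb i)) (ht (ha j)) (ht (hb j))

theorem analyticOrderAt_sum_sq [Fintype ι] {u : ι → ℝ → ℝ} {z₀ : ℝ}
    (hu : ∀ i, AnalyticAt ℝ (u i) z₀) :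
    analyticOrderAt (∑ i, u i ^ 2) z₀ = 2 * ⨅ i, analyticOrderAt (u i) z₀ := by
  have hsq (i : ι) : analyticOrderAt (u i ^ 2) z₀ = 2 * analyticOrderAt (u i) z₀ := by
    rw [analyticOrderAt_pow (hu i), nsmul_eq_mul, Nat.cast_ofNat]
  rcases isEmpty_or_nonempty ι with _ | _
  · rw [iInf_of_empty, ENat.mul_top two_ne_zero, Finset.univ_eq_empty, Finset.sum_empty]
    exact analyticOrderAt_eq_top.mpr (.of_forall fun _ => rfl)
  refine le_antisymm ?_ (le_analyticOrderAt_sum fun i _ => ?_)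
  · obtain ⟨i, hi⟩ := exists_eq_ciInf_of_finite (f := fun i => analyticOrderAt (u i) z₀)
    rw [← hi, ← hsq]
    refine analyticOrderAt_le_of_isBigO le_rfl ((hu i).pow 2) (IsBigO.of_norm_le fun t => ?_)
    simp only [Finset.sum_apply, Pi.pow_apply, Real.norm_eq_abs]
    rw [abs_of_nonneg (sq_nonneg (u i t))]
    exact Finset.single_le_sum (f := fun i => u i t ^ 2) (fun _ _ => sq_nonneg _)
      (Finset.mem_univ i)
  · rw [hsq]
    gcongr
    exact iInf_le _ i

theorem exists_eventually_eq_even_pow_mul_pos {h : ℝ → ℝ} {z₀ : ℝ} {r : ℕ}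
    (hh : AnalyticAt ℝ h z₀) (horder : analyticOrderAt h z₀ = 2 * r)
    (hnonneg : ∀ᶠ t in 𝓝 z₀, 0 ≤ h t) :
    ∃ g : ℝ → ℝ, AnalyticAt ℝ g z₀ ∧ 0 < g z₀ ∧ ∀ᶠ t in 𝓝 z₀, h t = (t - z₀) ^ (2 * r) * g t := by
  obtain ⟨g, hg, hg0, hhg⟩ := (hh.analyticOrderAt_eq_natCast (n := 2 * r)).mp (mod_cast horder)
  refine ⟨g, hg, lt_of_le_of_ne ?_ hg0.symm, hhg⟩
  refine ge_of_tendsto (hg.continuousAt.tendsto.mono_left (nhdsWithin_le_nhds (s := {z₀}ᶜ))) ?_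
  filter_upwards [nhdsWithin_le_nhds hhg, nhdsWithin_le_nhds hnonneg, self_mem_nhdsWithin]
    with t heq hle hne
  rw [heq] at hle
  exact nonneg_of_mul_nonneg_right hle ((even_two_mul r).pow_pos (sub_ne_zero.mpr hne))

theorem sign_pow_mul_abs_pow (t : ℝ) (r : ℕ) : Real.sign t ^ r * |t| ^ r = t ^ r := by
  rw [← mul_pow]
  rcases lt_trichotomy t 0 with ht | rfl | ht
  · rw [Real.sign_of_neg ht, abs_of_neg ht, neg_one_mul, neg_neg]
  · rw [abs_zero, mul_zero]
  · rw [Real.sign_of_pos ht, abs_of_pos ht, one_mul]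

theorem analyticAt_and_analyticOrderAt_sign_pow_mul_sqrt {h : ℝ → ℝ} {r : ℕ}
    (hh : AnalyticAt ℝ h 0) (horder : analyticOrderAt h 0 = 2 * r)
    (hnonneg : ∀ᶠ t in 𝓝 0, 0 ≤ h t) :
    AnalyticAt ℝ (fun t => Real.sign t ^ r * √(h t)) 0 ∧
      analyticOrderAt (fun t => Real.sign t ^ r * √(h t)) 0 = r := by
  obtain ⟨g, hg, hg0, hhg⟩ := exists_eventually_eq_even_pow_mul_pos hh horder hnonneg
  have hsqrt : AnalyticAt ℝ (fun t => √(g t)) 0 := (hg.contDiffAt.sqrt hg0.ne').analyticAt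
  have hroot : ∀ᶠ t in 𝓝 0, Real.sign t ^ r * √(h t) = t ^ r * √(g t) := by
    filter_upwards [hhg] with t ht
    rw [ht, sub_zero, mul_comm 2 r, pow_mul, Real.sqrt_mul (sq_nonneg _), Real.sqrt_sq_eq_abs,
      abs_pow, ← mul_assoc, sign_pow_mul_abs_pow]
  have hanalytic : AnalyticAt ℝ (fun t => Real.sign t ^ r * √(h t)) 0 :=
    ((analyticAt_id.pow r).mul hsqrt).congr (hroot.mono fun _ ht => ht.symm)
  refine ⟨hanalytic, hanalytic.analyticOrderAt_eq_natCast.mpr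
    ⟨_, hsqrt, (Real.sqrt_pos.mpr hg0).ne', ?_⟩⟩
  simpa only [sub_zero, smul_eq_mul] using hroot

theorem analyticAt_and_analyticOrderAt_sign_pow_mul_sqrt_sum_sq_div [Fintype ι]
    {u : ι → ℝ → ℝ} {c : ℝ} {r : ℕ} (hc : 0 < c) (hu : ∀ i, AnalyticAt ℝ (u i) 0)
    (hr : ⨅ i, analyticOrderAt (u i) 0 = r) :
    AnalyticAt ℝ (fun t => Real.sign t ^ r * √((∑ i, u i t ^ 2) / c)) 0 ∧
      analyticOrderAt (fun t => Real.sign t ^ r * √((∑ i, u i t ^ 2) / c)) 0 = r := by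
  have hsum : AnalyticAt ℝ (∑ i, u i ^ 2) 0 := Finset.analyticAt_sum _ fun i _ => (hu i).pow 2
  have hscale : (fun t => (∑ i, u i t ^ 2) / c) = c⁻¹ • ∑ i, u i ^ 2 := by
    ext t
    simp only [Pi.smul_apply, Finset.sum_apply, Pi.pow_apply, smul_eq_mul, div_eq_inv_mul]
  refine analyticAt_and_analyticOrderAt_sign_pow_mul_sqrt ?_ ?_ (.of_forall fun t => by positivity)
  · rw [hscale]
    exact hsum.const_smul
  · rw [hscale, analyticOrderAt_const_smul (inv_ne_zero hc.ne'), analyticOrderAt_sum_sq hu, hr]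

end Real

/-- **Order of energy splitting (Theorem on the orders):** for real-analytic
`f_1 ≤ … ≤ f_k` (for small `t ≥ 0`) with mean `f̄`, the minimum order of pairwise
differences, of differences of neighbours, the order of `f_1 − f_k`, and the minimum order of
differences from the mean all coincide; and if this common value `r` is finite, the signed
standard deviation `(sgn t)^r · √((1/k)·Σ (f_i − f̄)²)` is real-analytic near `0` of order `r`. -/
theorem order_energy_splitting {k : ℕ} (hk : 0 < k) (f : Fin k → ℝ → ℝ)
    (hf : ∀ i, AnalyticAt ℝ (f i) 0)
    (hord : ∃ ε > 0, ∀ t : ℝ, 0 ≤ t → t < ε → ∀ i j : Fin k, i ≤ j → f i t ≤ f j t) :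
    ((⨅ (i : Fin k) (j : Fin k) (_ : i < j), ord0 (fun t => f i t - f j t))
        = (⨅ (i : Fin k) (j : Fin k) (_ : (j : ℕ) = (i : ℕ) + 1),
            ord0 (fun t => f i t - f j t))) ∧
    ((⨅ (i : Fin k) (j : Fin k) (_ : i < j), ord0 (fun t => f i t - f j t))
        = ord0 (fun t => f ⟨0, hk⟩ t - f ⟨k - 1, by omega⟩ t)) ∧
    ((⨅ (i : Fin k) (j : Fin k) (_ : i < j), ord0 (fun t => f i t - f j t))
        = ⨅ i : Fin k, ord0 (fun t => f i t - (∑ m : Fin k, f m t) / k)) ∧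
    ∀ r : ℕ, (r : ℕ∞) = (⨅ (i : Fin k) (j : Fin k) (_ : i < j),
        ord0 (fun t => f i t - f j t)) →
      (∃ ε > 0, AnalyticOnNhd ℝ
        (fun t => Real.sign t ^ r *
          Real.sqrt ((∑ i : Fin k, (f i t - (∑ m : Fin k, f m t) / k) ^ 2) / k))
        (Set.Ioo (-ε) ε)) ∧
      ord0 (fun t => Real.sign t ^ r *
          Real.sqrt ((∑ i : Fin k, (f i t - (∑ m : Fin k, f m t) / k) ^ 2) / k)) = (r : ℕ∞) := by
  have hmono : ∀ᶠ t in 𝓝[>] (0 : ℝ), Monotone fun i => f i t := by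
    obtain ⟨ε, hε, hle⟩ := hord
    filter_upwards [Ioo_mem_nhdsGT hε] with t ht i j hij using hle t ht.1.le ht.2 i j hij
  have hbot : IsBot (⟨0, hk⟩ : Fin k) := fun j => Nat.zero_le j
  have htop : IsTop (⟨k - 1, by omega⟩ : Fin k) := fun j => Nat.le_sub_one_of_lt j.2
  have hdiff (i j) : ord0 (fun t => f i t - f j t) = analyticOrderAt (f i - f j) 0 :=
    ord0_eq_analyticOrderAt ((hf i).sub (hf j))
  have hdev (i) : AnalyticAt ℝ (fun t => f i t - (∑ m, f m t) / k) 0 := by fun_prop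
  have hmean : ⨅ i, analyticOrderAt (fun t => f i t - (∑ m, f m t) / k) 0 =
      ⨅ (i) (j), analyticOrderAt (f i - f j) 0 := by
    simpa only [Fintype.card_fin, smul_eq_mul, inv_mul_eq_div] using iInf_analyticOrderAt_sub_mean f
  have hpairs := iInf_lt_eq_iInf₂ (fun i => analyticOrderAt_sub_self (z₀ := 0) (f i))
    fun i j => analyticOrderAt_sub_comm (f i) (f j)
  simp only [hdiff, fun i => ord0_eq_analyticOrderAt (hdev i)]
  refine ⟨iInf_lt_eq_iInf_succ fun _ _ _ => min_analyticOrderAt_sub_le _ _ _,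
    hpairs.trans (iInf₂_analyticOrderAt_sub_of_monotone hf hmono hbot htop),
    hpairs.trans hmean.symm, fun r hr => ?_⟩
  obtain ⟨hroot, horder⟩ := analyticAt_and_analyticOrderAt_sign_pow_mul_sqrt_sum_sq_div
    (Nat.cast_pos.mpr hk) hdev (hmean.trans (hpairs.symm.trans hr.symm))
  refine ⟨?_, (ord0_eq_analyticOrderAt hroot).trans horder⟩
  simpa only [Real.ball_zero_eq_Ioo] using hroot.exists_ball_analyticOnNhd

end
end
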